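/- Under the Cartesian product, ω_p × ω_q = ω_{p+q} in Ω_{p+q}(I^{⊡(p+q)};ℤ), identifying I^{⊡p} ⊡ I^{⊡q} with I^{⊡(p+q)} in the natural way. -/

import Mathlib

/-- The boundary operator on the free ℤ-module generated by elementary paths (encoded as lists
of vertices): `∂ e_{i₀…i_n} = Σ_j (-1)^j e_{i₀…î_j…i_n}` for paths of length ≥ 1, and `∂ = 0`
on paths of length 0. -/
noncomputable def bdry (V : Type*) : (List V →₀ ℤ) →ₗ[ℤ] (List V →₀ ℤ) :=
  Finsupp.lsum ℤ fun l => LinearMap.toSpanSingleton ℤ _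
    (if 2 ≤ l.length then
      ∑ j ∈ Finset.range l.length, (-1 : ℤ) ^ j • Finsupp.single (l.eraseIdx j) (1 : ℤ)
    else 0)

/-- `u` is a ℤ-linear combination of strongly regular allowed elementary `n`-paths in the
digraph with adjacency `adj` (allowed: consecutive vertices joined by an edge; strongly
regular: all vertices pairwise distinct), i.e. `u ∈ A_n(G;ℤ)`. -/
def IsA {V : Type*} (adj : V → V → Prop) (n : ℕ) (u : List V →₀ ℤ) : Prop :=
  ∀ l ∈ u.support, l.length = n + 1 ∧ l.Chain' adj ∧ l.Nodup

/-- `u ∈ Ω_n(G;ℤ)`: `u ∈ A_n(G;ℤ)` and `∂u ∈ A_{n-1}(G;ℤ)`. -/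
def IsOmega {V : Type*} (adj : V → V → Prop) (n : ℕ) (u : List V →₀ ℤ) : Prop :=
  IsA adj n u ∧ IsA adj (n - 1) (bdry V u)
/-- The Cartesian product digraph: `(v,w) → (v',w')` iff `v = v'` and `w → w'`, or `v → v'` and
`w = w'`. -/
def prodAdj {X Y : Type*} (adjX : X → X → Prop) (adjY : Y → Y → Prop) :
    X × Y → X × Y → Prop :=
  fun a b => (a.1 = b.1 ∧ adjY a.2 b.2) ∨ (adjX a.1 b.1 ∧ a.2 = b.2)

/-- The cross product of two elementary paths (as lists of vertices):
`e_x × e_y = Σ_{z stair-like} (-1)^{L(z)} e_z`, where `L(z)` is the number of grid cells below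
the staircase of `z`.  Defined recursively on the first step of the merge; taking a `y`-step
first multiplies by `(-1)^{#remaining x-steps}` as each remaining `x`-step acquires one more
cell below it. -/
noncomputable def cross {X Y : Type*} : List X → List Y → (List (X × Y) →₀ ℤ)
  | [], _ => 0
  | _ :: _, [] => 0
  | [a], b :: ys => Finsupp.single ((b :: ys).map (fun t => (a, t))) 1
  | a :: a2 :: xs, [b] => Finsupp.single ((a :: a2 :: xs).map (fun s => (s, b))) 1
  | a :: a2 :: xs, b :: b2 :: ys =>
      Finsupp.mapDomain (List.cons (a, b)) (cross (a2 :: xs) (b :: b2 :: ys)) +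
      ((-1 : ℤ) ^ (xs.length + 1)) •
        Finsupp.mapDomain (List.cons (a, b)) (cross (a :: a2 :: xs) (b2 :: ys))
termination_by x y => x.length + y.length
decreasing_by all_goals simp <;> omega

/-- The bilinear extension of the cross product to ℤ-linear combinations of paths. -/
noncomputable def crossF {X Y : Type*} (u : List X →₀ ℤ) (v : List Y →₀ ℤ) :
    List (X × Y) →₀ ℤ :=
  u.sum fun x cx => v.sum fun y cy => (cx * cy) • cross x y
/-- The standard `n`-path `ω_n = Σ_{α ∈ E_n} (-1)^{σ(α)} e_α` in the `n`-cube `I^{⊡n}`: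
allowed `n`-paths from `(0,…,0)` to `(1,…,1)` correspond to permutations `π` of the `n`
coordinates (flipping coordinate `π(k)` at step `k+1`), and the sign `(-1)^{σ(α)}` given by
the number of inversions is the sign of `π`. -/
noncomputable def stdOmega (n : ℕ) : List (Fin n → Bool) →₀ ℤ :=
  ∑ π : Equiv.Perm (Fin n),
    ((Equiv.Perm.sign π : ℤˣ) : ℤ) •
      Finsupp.single
        ((List.range (n + 1)).map fun k => fun i : Fin n => decide ((π⁻¹ i : Fin n).val < k))
        (1 : ℤ)

/-!
Cut off the first vertex of every path. The rising paths leaving a vertex `v` of the cube satisfy a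
recursion over the coordinates of `v` that can still be flipped, with sign `(-1)` to the number of
unflipped coordinates on the left; this is the Laplace expansion of the sum over permutations. On a
concatenated vertex `(v, w)` this signed sum splits by the Leibniz rule: flipping a coordinate of
`w` additionally passes all unflipped coordinates of `v`, as many as there are steps left in the
first factor. The cross product of two paths obeys the same recursion with the same sign.
-/

section CrossProduct

open Finsupp

variable {X Y : Type*}

/-- The linear map `e_x ↦ e_{a x}` on chains of paths, prepending the vertex `a`. -/
noncomputable def prependVertex (a : X) : (List X →₀ ℤ) →ₗ[ℤ] (List X →₀ ℤ) :=
  lmapDomain ℤ ℤ (List.cons a)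

@[simp]
theorem prependVertex_single (a : X) (x : List X) (c : ℤ) :
    prependVertex a (single x c) = single (a :: x) c :=
  mapDomain_single

variable (X) in
/-- The chains of paths with exactly `m` vertices, that is, of degree `m - 1`; the empty path is
allowed and spans `pathChains X 0`. -/
noncomputable def pathChains (m : ℕ) : Submodule ℤ (List X →₀ ℤ) :=
  supported ℤ ℤ {x | x.length = m}

theorem prependVertex_mem_pathChains (a : X) {m : ℕ} {u : List X →₀ ℤ} (hu : u ∈ pathChains X m) :
    prependVertex a u ∈ pathChains X (m + 1) := by
  have h_preimage : {x : List X | x.length = m} = List.cons a ⁻¹' {x | x.length = m + 1} := by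
    ext x
    simp
  rw [pathChains, h_preimage] at hu
  exact supported_comap_lmapDomain ℤ ℤ (List.cons a) _ hu

theorem bilin_eq_of_mem_supported {R α β M : Type*} [CommSemiring R] [AddCommMonoid M] [Module R M]
    {B C : (α →₀ R) →ₗ[R] (β →₀ R) →ₗ[R] M} {s : Set α} {t : Set β}
    (h : ∀ x ∈ s, ∀ y ∈ t, B (single x 1) (single y 1) = C (single x 1) (single y 1))
    {u : α →₀ R} {w : β →₀ R} (hu : u ∈ supported R R s) (hw : w ∈ supported R R t) :
    B u w = C u w := by
  rw [supported_eq_span_single] at hu hw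
  have h_left : ∀ x ∈ s, B (single x 1) w = C (single x 1) w := fun x hx =>
    LinearMap.eqOn_span (by rintro _ ⟨y, hy, rfl⟩; exact h x hx y hy) hw
  exact LinearMap.eqOn_span (f := B.flip w) (g := C.flip w)
    (by rintro _ ⟨x, hx, rfl⟩; exact h_left x hx) hu

@[simp]
theorem cross_nil_left (y : List Y) : cross ([] : List X) y = 0 := by
  rw [cross]

@[simp]
theorem cross_nil_right (x : List X) : cross x ([] : List Y) = 0 := by
  cases x <;> rw [cross]

-- Since `cross [] y = cross x [] = 0`, this also covers the case of a single vertex on one side.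
theorem cross_cons_cons (a : X) (b : Y) {x : List X} {y : List Y} (h : x ≠ [] ∨ y ≠ []) :
    cross (a :: x) (b :: y) =
      prependVertex (a, b) (cross x (b :: y) + (-1 : ℤ) ^ x.length • cross (a :: x) y) := by
  match x, y, h with
  | [], _ :: _, _ => simp [cross]
  | [a'], [], _ => simp [cross]
  | a' :: a'' :: x, [], _ => simp [cross]
  | a' :: x, b' :: y, _ =>
    rw [cross, map_add, map_smul]
    rfl

variable (X Y) in
/-- The cross product of chains as a bilinear map. -/
noncomputable def crossLin : (List X →₀ ℤ) →ₗ[ℤ] (List Y →₀ ℤ) →ₗ[ℤ] (List (X × Y) →₀ ℤ) :=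
  linearCombination ℤ fun x => linearCombination ℤ fun y => cross x y

theorem crossF_eq_crossLin (u : List X →₀ ℤ) (w : List Y →₀ ℤ) :
    crossF u w = crossLin X Y u w := by
  simp only [crossF, crossLin, linearCombination_apply, Finsupp.sum, LinearMap.sum_apply,
    LinearMap.smul_apply, Finset.smul_sum, mul_smul]

@[simp]
theorem crossLin_single_single (x : List X) (y : List Y) :
    crossLin X Y (single x 1) (single y 1) = cross x y := by
  simp [crossLin]

theorem crossLin_single_nil_left (w : List Y →₀ ℤ) : crossLin X Y (single [] 1) w = 0 := by
  simp [crossLin, linearCombination_apply]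

theorem crossLin_single_nil_right (u : List X →₀ ℤ) : crossLin X Y u (single [] 1) = 0 := by
  simp [crossLin, linearCombination_apply, Finsupp.sum, LinearMap.sum_apply]

theorem crossLin_prependVertex (a : X) (b : Y) {m l : ℕ} (hml : m ≠ 0 ∨ l ≠ 0)
    {u : List X →₀ ℤ} {w : List Y →₀ ℤ} (hu : u ∈ pathChains X m) (hw : w ∈ pathChains Y l) :
    crossLin X Y (prependVertex a u) (prependVertex b w) =
      prependVertex (a, b) (crossLin X Y u (prependVertex b w) +
        (-1 : ℤ) ^ m • crossLin X Y (prependVertex a u) w) := by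
  refine bilin_eq_of_mem_supported
    (B := (crossLin X Y).compl₁₂ (prependVertex a) (prependVertex b))
    (C := ((crossLin X Y).compl₂ (prependVertex b) +
      (-1 : ℤ) ^ m • (crossLin X Y).comp (prependVertex a)).compr₂ (prependVertex (a, b)))
    ?_ hu hw
  rintro x rfl y rfl
  simpa using cross_cons_cons a b (by simpa using hml)

end CrossProduct

section FlipSum

open Finset

variable {ι : Type*} [Fintype ι]

/-- The number of coordinates of the cube vertex `v` that are still to be flipped. -/
def numZeros (v : ι → Bool) : ℕ := #{i | v i = false}

theorem numZeros_update [DecidableEq ι] {v : ι → Bool} {i : ι} (hi : v i = false) :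
    numZeros (Function.update v i true) + 1 = numZeros v := by
  have h_erase : ({j | Function.update v i true j = false} : Finset ι) =
      ({j | v j = false} : Finset ι).erase i := by
    ext j
    by_cases hj : j = i <;> simp [hj]
  rw [numZeros, h_erase, card_erase_add_one (by simpa using hi), numZeros]

variable [LinearOrder ι]

/-- The number of coordinates of `v` to the left of `i` that are still to be flipped. -/
def zerosBelow (v : ι → Bool) (i : ι) : ℕ := #{j | j < i ∧ v j = false}

variable {M : Type*} [AddCommGroup M]

/-- The signed sum of `f` over the out-neighbours of `v` in the cube. The sign of flipping the
coordinate `i` counts the inversions between `i` and the coordinates flipped later. -/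
def flipSum (f : (ι → Bool) → M) (v : ι → Bool) : M :=
  ∑ i with v i = false, (-1 : ℤ) ^ zerosBelow v i • f (Function.update v i true)

theorem map_flipSum {N F : Type*} [AddCommGroup N] [FunLike F M N] [AddMonoidHomClass F M N]
    (g : F) (f : (ι → Bool) → M) (v : ι → Bool) :
    g (flipSum f v) = flipSum (fun v' => g (f v')) v := by
  simp only [flipSum, map_sum, map_zsmul]

theorem flipSum_congr {f g : (ι → Bool) → M} {v : ι → Bool}
    (h : ∀ v', numZeros v' + 1 = numZeros v → f v' = g v') : flipSum f v = flipSum g v :=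
  sum_congr rfl fun _ hi => by rw [h _ (numZeros_update (mem_filter.1 hi).2)]

theorem flipSum_eq_zero (f : (ι → Bool) → M) {v : ι → Bool} (hv : numZeros v = 0) :
    flipSum f v = 0 := by
  rw [flipSum, card_eq_zero.1 hv, sum_empty]

theorem zerosBelow_orderEmbedding {k : ℕ} (e : Fin k ↪o ι) {v : ι → Bool}
    (he : Set.range e = {i | v i = false}) (j : Fin k) : zerosBelow v (e j) = j := by
  have h_map : ({i | i < e j ∧ v i = false} : Finset ι) = (Iio j).map e.toEmbedding := by
    ext i
    have hi : v i = false ↔ ∃ j', e j' = i := (Set.ext_iff.1 he i).symm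
    simp only [mem_filter_univ, hi, mem_map, mem_Iio]
    constructor
    · rintro ⟨hlt, j', rfl⟩
      exact ⟨j', e.lt_iff_lt.1 hlt, rfl⟩
    · rintro ⟨j', hlt, rfl⟩
      exact ⟨e.lt_iff_lt.2 hlt, j', rfl⟩
  rw [zerosBelow, h_map, card_map, Fin.card_Iio]

theorem flipSum_eq_sum_orderEmbedding {k : ℕ} (e : Fin k ↪o ι) {v : ι → Bool}
    (he : Set.range e = {i | v i = false}) (f : (ι → Bool) → M) :
    flipSum f v = ∑ j : Fin k, (-1 : ℤ) ^ (j : ℕ) • f (Function.update v (e j) true) := by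
  have h_map : ({i | v i = false} : Finset ι) = univ.map e.toEmbedding := by
    ext i
    simpa using (Set.ext_iff.1 he i).symm
  rw [flipSum, h_map, sum_map]
  simp only [RelEmbedding.coe_toEmbedding, zerosBelow_orderEmbedding e he]

end FlipSum

section Append

variable {p q : ℕ} (v : Fin p → Bool) (w : Fin q → Bool)

theorem castAdd_lt_natAdd (i : Fin p) (j : Fin q) : Fin.castAdd q i < Fin.natAdd p j :=
  Fin.lt_def.2 (i.isLt.trans_le (Fin.le_coe_natAdd p j))

theorem update_append_castAdd (i : Fin p) (b : Bool) :
    Function.update (Fin.append v w) (Fin.castAdd q i) b =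
      Fin.append (Function.update v i b) w := by
  ext j
  refine Fin.addCases (fun j => ?_) (fun j => ?_) j
  · simp [Function.update_apply]
  · simp [Function.update_of_ne (castAdd_lt_natAdd i j).ne']

theorem update_append_natAdd (i : Fin q) (b : Bool) :
    Function.update (Fin.append v w) (Fin.natAdd p i) b =
      Fin.append v (Function.update w i b) := by
  ext j
  refine Fin.addCases (fun j => ?_) (fun j => ?_) j
  · simp [Function.update_of_ne (castAdd_lt_natAdd j i).ne]
  · simp [Function.update_apply]

theorem zerosBelow_append_castAdd (i : Fin p) :
    zerosBelow (Fin.append v w) (Fin.castAdd q i) = zerosBelow v i := by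
  simp only [zerosBelow, Finset.card_filter, Fin.sum_univ_add, (castAdd_lt_natAdd i _).not_gt,
    (Fin.strictMono_castAdd q).lt_iff_lt, Fin.append_left]
  simp

theorem zerosBelow_append_natAdd (i : Fin q) :
    zerosBelow (Fin.append v w) (Fin.natAdd p i) = numZeros v + zerosBelow w i := by
  simp only [zerosBelow, numZeros, Finset.card_filter, Fin.sum_univ_add, castAdd_lt_natAdd,
    Fin.natAdd_lt_natAdd_iff, Fin.append_left, Fin.append_right, true_and]

theorem flipSum_append {M : Type*} [AddCommGroup M] (f : (Fin (p + q) → Bool) → M) :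
    flipSum f (Fin.append v w) =
      flipSum (fun v' => f (Fin.append v' w)) v +
        (-1 : ℤ) ^ numZeros v • flipSum (fun w' => f (Fin.append v w')) w := by
  simp only [flipSum, Finset.sum_filter, Fin.sum_univ_add, Fin.append_left, Fin.append_right,
    zerosBelow_append_castAdd, zerosBelow_append_natAdd, update_append_castAdd,
    update_append_natAdd, Finset.smul_sum, smul_ite, smul_zero, smul_smul, pow_add]

end Append

section RisingPaths

variable {ι : Type*} [Fintype ι] [LinearOrder ι]

/-- The signed sum of the rising `k`-step paths in the cube starting at a vertex, with that starting
vertex removed from each path. -/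
noncomputable def risingTails : ℕ → (ι → Bool) → (List (ι → Bool) →₀ ℤ)
  | 0, _ => Finsupp.single [] 1
  | k + 1, v => flipSum (fun v' => prependVertex v' (risingTails k v')) v

/-- The signed sum of the rising `k`-step paths in the cube starting at `v`. -/
noncomputable def risingPaths (k : ℕ) (v : ι → Bool) : List (ι → Bool) →₀ ℤ :=
  prependVertex v (risingTails k v)

theorem risingTails_succ (k : ℕ) (v : ι → Bool) :
    risingTails (k + 1) v = flipSum (risingPaths k) v :=
  rfl

theorem risingTails_mem_pathChains (k : ℕ) (v : ι → Bool) :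
    risingTails k v ∈ pathChains (ι → Bool) k := by
  induction k generalizing v with
  | zero => exact Finsupp.single_mem_supported ℤ 1 rfl
  | succ k ih =>
    exact Submodule.sum_mem _ fun i _ =>
      Submodule.smul_mem _ _ (prependVertex_mem_pathChains _ (ih _))

end RisingPaths

section CubeCross

variable {p q : ℕ}

variable (p q) in
/-- The cross product of chains in two cubes, viewed in the cube of dimension `p + q` by
concatenating coordinates. -/
noncomputable def cubeCross : (List (Fin p → Bool) →₀ ℤ) →ₗ[ℤ] (List (Fin q → Bool) →₀ ℤ) →ₗ[ℤ]
    (List (Fin (p + q) → Bool) →₀ ℤ) :=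
  (crossLin _ _).compr₂ (Finsupp.lmapDomain ℤ ℤ (List.map fun ab => Fin.append ab.1 ab.2))

theorem cubeCross_prependVertex (v : Fin p → Bool) (w : Fin q → Bool) {m l : ℕ}
    (hml : m ≠ 0 ∨ l ≠ 0) {s : List (Fin p → Bool) →₀ ℤ} {t : List (Fin q → Bool) →₀ ℤ}
    (hs : s ∈ pathChains _ m) (ht : t ∈ pathChains _ l) :
    cubeCross p q (prependVertex v s) (prependVertex w t) =
      prependVertex (Fin.append v w) (cubeCross p q s (prependVertex w t) +
        (-1 : ℤ) ^ m • cubeCross p q (prependVertex v s) t) := by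
  simp only [cubeCross, LinearMap.compr₂_apply, crossLin_prependVertex v w hml hs ht,
    ← map_smul, ← map_add]
  simp only [prependVertex, Finsupp.lmapDomain_apply, ← Finsupp.mapDomain_comp]
  rfl

theorem cubeCross_risingPaths {k l : ℕ} {v : Fin p → Bool} {w : Fin q → Bool}
    (hv : numZeros v = k) (hw : numZeros w = l) :
    cubeCross p q (risingPaths k v) (risingPaths l w) = risingPaths (k + l) (Fin.append v w) := by
  induction hN : k + l generalizing k l v w with
  | zero =>
    obtain ⟨rfl, rfl⟩ : k = 0 ∧ l = 0 := by omega
    simp [risingPaths, risingTails, cubeCross, cross]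
  | succ N ih =>
    have h_left : cubeCross p q (risingTails k v) (risingPaths l w) =
        flipSum (fun v' => risingPaths N (Fin.append v' w)) v := by
      cases k with
      | zero => simp [risingTails, cubeCross, crossLin_single_nil_left, flipSum_eq_zero _ hv]
      | succ k =>
        rw [risingTails_succ, ← LinearMap.flip_apply, map_flipSum]
        exact flipSum_congr fun v' hv' => ih (by omega) hw (by omega)
    have h_right : cubeCross p q (risingPaths k v) (risingTails l w) =
        flipSum (fun w' => risingPaths N (Fin.append v w')) w := by
      cases l with
      | zero => simp [risingTails, cubeCross, crossLin_single_nil_right, flipSum_eq_zero _ hw]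
      | succ l =>
        rw [risingTails_succ, map_flipSum]
        exact flipSum_congr fun w' hw' => ih hv (by omega) (by omega)
    calc cubeCross p q (risingPaths k v) (risingPaths l w)
      _ = prependVertex (Fin.append v w) (cubeCross p q (risingTails k v) (risingPaths l w) +
            (-1 : ℤ) ^ k • cubeCross p q (risingPaths k v) (risingTails l w)) :=
          cubeCross_prependVertex v w (by omega) (risingTails_mem_pathChains k v)
            (risingTails_mem_pathChains l w)
      _ = prependVertex (Fin.append v w) (flipSum (risingPaths N) (Fin.append v w)) := by
          rw [h_left, h_right, flipSum_append, hv]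
      _ = risingPaths (N + 1) (Fin.append v w) := rfl

end CubeCross

section Permutations

open Equiv

variable {k : ℕ}

/-- The permutation with one-line notation `i, i.succAbove (σ 0), i.succAbove (σ 1), …`. -/
def permCons (i : Fin (k + 1)) (σ : Perm (Fin k)) : Perm (Fin (k + 1)) :=
  i.cycleRange.symm * Perm.decomposeFin.symm (0, σ)

@[simp]
theorem permCons_zero (i : Fin (k + 1)) (σ : Perm (Fin k)) : permCons i σ 0 = i := by
  simp [permCons, Fin.cycleRange_symm_zero]

@[simp]
theorem permCons_succ (i : Fin (k + 1)) (σ : Perm (Fin k)) (j : Fin k) :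
    permCons i σ j.succ = i.succAbove (σ j) := by
  simp [permCons, Fin.cycleRange_symm_succ]

theorem sign_permCons (i : Fin (k + 1)) (σ : Perm (Fin k)) :
    Perm.sign (permCons i σ) = (-1) ^ (i : ℕ) * Perm.sign σ := by
  simp [permCons, Fin.sign_cycleRange, Perm.decomposeFin.symm_sign]

theorem permCons_bijective :
    Function.Bijective fun x : Fin (k + 1) × Perm (Fin k) => permCons x.1 x.2 := by
  refine (Fintype.bijective_iff_injective_and_card _).2 ⟨?_, ?_⟩
  · rintro ⟨i, σ⟩ ⟨i', σ'⟩ (h : permCons i σ = permCons i' σ')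
    obtain rfl : i = i' := by simpa using DFunLike.congr_fun h 0
    simpa [permCons] using h
  · simp [Fintype.card_perm, Nat.factorial_succ]

theorem sum_perm_fin_succ {M : Type*} [AddCommMonoid M] (f : Perm (Fin (k + 1)) → M) :
    ∑ π, f π = ∑ i, ∑ σ, f (permCons i σ) := by
  rw [← permCons_bijective.sum_comp, Fintype.sum_prod_type]

end Permutations

section FlipPath

variable {ι : Type*} [DecidableEq ι] {k : ℕ}

/-- The path in the cube which starts at `v` and sets the coordinates `f 0, f 1, …` to `1` in this
order. -/
def flipPath (v : ι → Bool) (f : Fin k → ι) : List (ι → Bool) :=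
  (List.range (k + 1)).map fun t i => v i || decide (∃ j : Fin k, j.val < t ∧ f j = i)

theorem flipPath_zero (v : ι → Bool) (f : Fin 0 → ι) : flipPath v f = [v] := by
  simp [flipPath]

theorem flipPath_succ (v : ι → Bool) (f : Fin (k + 1) → ι) :
    flipPath v f = v :: flipPath (Function.update v (f 0) true) (fun j => f j.succ) := by
  rw [flipPath, List.range_succ_eq_map, List.map_cons, List.map_map]
  congr 1
  · simp
  · refine List.map_congr_left fun t _ => funext fun i => ?_
    by_cases hi : f 0 = i
    · subst hi
      simp [Fin.exists_fin_succ]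
    · simp [Fin.exists_fin_succ, hi, Function.update_of_ne (Ne.symm hi)]

end FlipPath

section StdOmega

open Equiv

theorem range_succAboveOrderEmb_trans {ι : Type*} [LinearOrder ι] {k : ℕ} (e : Fin (k + 1) ↪o ι)
    {v : ι → Bool} (he : Set.range e = {i | v i = false}) (j : Fin (k + 1)) :
    Set.range ((Fin.succAboveOrderEmb j).trans e) =
      {i | Function.update v (e j) true i = false} := by
  have h_range : Set.range ((Fin.succAboveOrderEmb j).trans e) = Set.range e \ {e j} := by
    rw [← Set.image_univ (f := e), ← Set.image_singleton, ← Set.image_sdiff e.injective,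
      ← Set.compl_eq_univ_sdiff, ← Fin.range_succAbove, ← Set.range_comp]
    rfl
  rw [h_range, he]
  ext i
  by_cases hi : i = e j <;> simp [hi]

theorem sum_sign_smul_flipPath {ι : Type*} [Fintype ι] [LinearOrder ι] {k : ℕ} (e : Fin k ↪o ι)
    {v : ι → Bool} (he : Set.range e = {i | v i = false}) :
    ∑ π : Perm (Fin k), (Perm.sign π : ℤ) • Finsupp.single (flipPath v fun j => e (π j)) (1 : ℤ) =
      risingPaths k v := by
  induction k generalizing v with
  | zero => simp [risingPaths, risingTails, flipPath_zero]
  | succ k ih =>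
    rw [sum_perm_fin_succ, risingPaths, risingTails_succ, flipSum_eq_sum_orderEmbedding e he,
      map_sum]
    refine Finset.sum_congr rfl fun i _ => ?_
    rw [← ih _ (range_succAboveOrderEmb_trans e he i), map_smul, map_sum, Finset.smul_sum]
    refine Finset.sum_congr rfl fun σ _ => ?_
    simp [flipPath_succ, sign_permCons]

theorem stdOmega_eq_risingPaths (n : ℕ) : stdOmega n = risingPaths n fun _ => false := by
  have h_path (π : Perm (Fin n)) : flipPath (fun _ => false) (fun j => π j) =
      (List.range (n + 1)).map fun k i => decide ((π⁻¹ i).val < k) := by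
    refine List.map_congr_left fun t _ => funext fun i => ?_
    simp [← Perm.eq_inv_iff_eq]
  rw [← sum_sign_smul_flipPath (RelEmbedding.refl (· ≤ ·)) (by simp)]
  simp only [stdOmega, RelEmbedding.refl_apply, h_path]

end StdOmega

/-- `ω_p × ω_q = ω_{p+q}`, identifying `I^{⊡p} ⊡ I^{⊡q}` with `I^{⊡(p+q)}` via concatenation
of the coordinate strings (`Fin.append`). -/
theorem stdOmega_cross_stdOmega (p q : ℕ) :
    Finsupp.mapDomain
        (List.map fun ab : (Fin p → Bool) × (Fin q → Bool) => Fin.append ab.1 ab.2)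
        (crossF (stdOmega p) (stdOmega q)) = stdOmega (p + q) := by
  have h_zeros (n : ℕ) : numZeros (fun _ : Fin n => false) = n := by simp [numZeros]
  have h_append : Fin.append (fun _ : Fin p => false) (fun _ : Fin q => false) = fun _ => false :=
    Fin.append_castAdd_natAdd (f := fun _ : Fin (p + q) => false)
  rw [crossF_eq_crossLin]
  simp only [stdOmega_eq_risingPaths]
  rw [← h_append]
  exact cubeCross_risingPaths (h_zeros p) (h_zeros q)
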